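/- The function ψ_∞(ξ) = 2ξ ∫₀^∞ (1 − e^{−ζ}) / ( √(2ζ) · √(h(ζ,ξ)) · (√(2ζ) + √(h(ζ,ξ))) ) dζ, with h(ζ,ξ) = 2ζ + ξ(1 − e^{−ζ}), is real analytic on (0,∞), has derivative ψ_∞′(ξ) = ∫₀^∞ (1 − e^{−ζ}) / h(ζ,ξ)^{3/2} dζ > 0 for ξ > 0, and hence is strictly increasing on [0,∞). -/

import Mathlib

open Real Set MeasureTheory Filter

/-- `h(ζ,ξ) = 2ζ + ξ(1 − e^(−ζ))`. -/
noncomputable def hLim (ζ ξ : ℝ) : ℝ := 2 * ζ + ξ * (1 - Real.exp (-ζ))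

/-- The limiting rescaled deviation-angle function
`ψ_∞(ξ) = 2ξ ∫₀^∞ (1 − e^(−ζ)) / (√(2ζ) √(h(ζ,ξ)) (√(2ζ) + √(h(ζ,ξ)))) dζ`. -/
noncomputable def psiInf (ξ : ℝ) : ℝ :=
  2 * ξ * ∫ ζ in Ioi (0:ℝ),
    (1 - Real.exp (-ζ)) /
      (Real.sqrt (2 * ζ) * Real.sqrt (hLim ζ ξ) * (Real.sqrt (2 * ζ) + Real.sqrt (hLim ζ ξ)))

/-!
Rationalising the integrand gives
`ψ_∞(ξ) = ∫₀^∞ 2 ((2ζ)^(-1/2) - h(ζ,ξ)^(-1/2)) dζ`.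
Since `0 < 1 - e^(-ζ) ≤ ζ`, the number `h(ζ,z)` has real part at least `ζ` as soon as `Re z > -1`,
so the integrand extends holomorphically in `z` to this half-plane (`hasDerivAt_cInt`), and its
derivative `(1 - e^(-ζ)) h(ζ,z)^(-3/2)` is dominated by the integrable function
`(1 - e^(-ζ)) ζ^(-3/2)` (`norm_cDer_le`, `integrableOn_bd`). The integrand vanishes at `z = 0`, so
the mean value inequality makes it integrable for every such `z`, and differentiation under the
integral sign shows that the integral is holomorphic on `Re z > -1` (`hasDerivAt_cPsi`).
Its restriction to the real axis is `ψ_∞` (`cPsi_ofReal`), which is therefore analytic with the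
stated derivative on `(-1,∞)`. The half-plane contains `0`, so strict monotonicity up to the
endpoint `0` follows from positivity of the derivative.
-/

/-- The weight `1 - e^(-ζ)`. -/
noncomputable def uw (ζ : ℝ) : ℝ := 1 - Real.exp (-ζ)

/-- The complexification of `hLim` in its second variable. -/
noncomputable def cH (ζ : ℝ) (z : ℂ) : ℂ := ((2 * ζ : ℝ) : ℂ) + z * (uw ζ : ℂ)

/-- The rationalised integrand of `ψ_∞`, extended to complex `z` by principal powers. -/
noncomputable def cInt (z : ℂ) (ζ : ℝ) : ℂ :=
  2 * (((2 * ζ : ℝ) : ℂ) ^ (((-1/2 : ℝ)) : ℂ) - cH ζ z ^ (((-1/2 : ℝ)) : ℂ))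

/-- The derivative of `cInt` with respect to `z`. -/
noncomputable def cDer (z : ℂ) (ζ : ℝ) : ℂ :=
  (uw ζ : ℂ) * cH ζ z ^ (((-3/2 : ℝ)) : ℂ)

/-- The holomorphic extension of `ψ_∞` to the half-plane `Re z > -1`. -/
noncomputable def cPsi (z : ℂ) : ℂ := ∫ ζ in Ioi (0:ℝ), cInt z ζ

/-- The half-plane `Re z > -1`. -/
def halfPl : Set ℂ := {z | -1 < z.re}

lemma isOpen_halfPl : IsOpen halfPl := isOpen_lt continuous_const Complex.continuous_re

lemma convex_halfPl : Convex ℝ halfPl := convex_halfSpace_re_gt (-1)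

lemma uw_pos {ζ : ℝ} (hζ : 0 < ζ) : 0 < uw ζ := by
  unfold uw
  have : Real.exp (-ζ) < 1 := Real.exp_lt_one_iff.2 (by linarith)
  linarith

lemma uw_le (ζ : ℝ) : uw ζ ≤ ζ := by
  unfold uw
  linarith [Real.add_one_le_exp (-ζ)]

lemma uw_le_one (ζ : ℝ) : uw ζ ≤ 1 := by
  unfold uw
  linarith [Real.exp_pos (-ζ)]

lemma le_re_cH {ζ : ℝ} (hζ : 0 < ζ) {z : ℂ} (hz : z ∈ halfPl) : ζ ≤ (cH ζ z).re := by
  have h1 := uw_pos hζ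
  have h2 := uw_le ζ
  have h3 : -1 < z.re := hz
  simp only [cH, Complex.add_re, Complex.ofReal_re, Complex.mul_re, Complex.ofReal_im, mul_zero,
    sub_zero]
  nlinarith

lemma cH_mem_slitPlane {ζ : ℝ} (hζ : 0 < ζ) {z : ℂ} (hz : z ∈ halfPl) :
    cH ζ z ∈ Complex.slitPlane :=
  Or.inl (hζ.trans_le (le_re_cH hζ hz))

lemma hasDerivAt_cInt {ζ : ℝ} (hζ : 0 < ζ) {z : ℂ} (hz : z ∈ halfPl) :
    HasDerivAt (fun z => cInt z ζ) (cDer z ζ) z := by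
  have h0 : HasDerivAt (fun z => cH ζ z) (uw ζ : ℂ) z := by
    simpa [cH] using ((hasDerivAt_id z).mul_const (uw ζ : ℂ)).const_add (((2 * ζ : ℝ) : ℂ))
  have h1 := h0.cpow_const (c := (((-1/2 : ℝ)) : ℂ)) (cH_mem_slitPlane hζ hz)
  have h2 := (h1.const_sub (((2 * ζ : ℝ) : ℂ) ^ (((-1/2 : ℝ)) : ℂ))).const_mul (2:ℂ)
  refine h2.congr_deriv ?_
  have he : (((-1/2 : ℝ)) : ℂ) - 1 = (((-3/2 : ℝ)) : ℂ) := by push_cast; norm_num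
  rw [he, cDer]
  push_cast
  ring

/-- Holds because `|w ^ (-3/2)| = |w| ^ (-3/2)` and `|h(ζ,z)| ≥ Re h(ζ,z) ≥ ζ`. -/
lemma norm_cDer_le {ζ : ℝ} (hζ : 0 < ζ) {z : ℂ} (hz : z ∈ halfPl) :
    ‖cDer z ζ‖ ≤ uw ζ * ζ ^ (-3/2 : ℝ) := by
  have h1 := le_re_cH hζ hz
  have h2 : ζ ≤ ‖cH ζ z‖ := h1.trans (Complex.re_le_norm _)
  rw [cDer, norm_mul, Complex.norm_real, Real.norm_of_nonneg (uw_pos hζ).le,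
    Complex.norm_cpow_real]
  exact mul_le_mul_of_nonneg_left
    (Real.rpow_le_rpow_of_nonpos hζ h2 (by norm_num)) (uw_pos hζ).le

lemma measurable_uw : Measurable uw := by unfold uw; fun_prop

lemma integrableOn_bd : IntegrableOn (fun ζ : ℝ => uw ζ * ζ ^ (-3/2 : ℝ)) (Ioi 0) := by
  have hm : Measurable (fun ζ : ℝ => uw ζ * ζ ^ (-3/2 : ℝ)) := by
    have := measurable_uw
    fun_prop
  rw [← Ioc_union_Ioi_eq_Ioi (zero_le_one (α := ℝ))]
  refine IntegrableOn.union ?_ ?_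
  · have hi : IntegrableOn (fun ζ : ℝ => ζ ^ (-1/2 : ℝ)) (Ioc 0 1) := by
      rw [← intervalIntegrable_iff_integrableOn_Ioc_of_le zero_le_one]
      exact intervalIntegral.intervalIntegrable_rpow' (by norm_num)
    refine Integrable.mono' hi hm.aestronglyMeasurable ?_
    filter_upwards [ae_restrict_mem measurableSet_Ioc] with ζ hζ
    have hp := Real.rpow_nonneg hζ.1.le (-3/2 : ℝ)
    rw [Real.norm_of_nonneg (mul_nonneg (uw_pos hζ.1).le hp)]
    calc uw ζ * ζ ^ (-3/2 : ℝ) ≤ ζ * ζ ^ (-3/2 : ℝ) :=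
          mul_le_mul_of_nonneg_right (uw_le ζ) hp
      _ = ζ ^ (-1/2 : ℝ) := by
          rw [← Real.rpow_one_add' hζ.1.le (by norm_num)]; norm_num
  · have hi : IntegrableOn (fun ζ : ℝ => ζ ^ (-3/2 : ℝ)) (Ioi 1) :=
      integrableOn_Ioi_rpow_of_lt (by norm_num) zero_lt_one
    refine Integrable.mono' hi hm.aestronglyMeasurable ?_
    filter_upwards [ae_restrict_mem measurableSet_Ioi] with ζ hζ
    have h0 : 0 < ζ := zero_lt_one.trans hζ
    have hp := Real.rpow_nonneg h0.le (-3/2 : ℝ)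
    rw [Real.norm_of_nonneg (mul_nonneg (uw_pos h0).le hp)]
    exact mul_le_of_le_one_left hp (uw_le_one ζ)

lemma measurable_cH (z : ℂ) : Measurable (fun ζ => cH ζ z) := by
  have := measurable_uw
  unfold cH
  fun_prop

lemma measurable_cInt (z : ℂ) : Measurable (cInt z) := by
  have := measurable_cH z
  unfold cInt
  fun_prop

lemma measurable_cDer (z : ℂ) : Measurable (cDer z) := by
  have := measurable_cH z
  have := measurable_uw
  unfold cDer
  fun_prop

lemma integrableOn_cInt {z : ℂ} (hz : z ∈ halfPl) : IntegrableOn (cInt z) (Ioi 0) := by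
  refine Integrable.mono' (integrableOn_bd.mul_const ‖z‖)
    (measurable_cInt z).aestronglyMeasurable ?_
  filter_upwards [ae_restrict_mem measurableSet_Ioi] with ζ hζ
  have h0 : (0:ℂ) ∈ halfPl := by simp [halfPl]
  -- The mean value inequality between `0`, where the integrand vanishes, and `z`.
  have := convex_halfPl.norm_image_sub_le_of_norm_hasDerivWithin_le (𝕜 := ℂ)
    (fun w hw => (hasDerivAt_cInt hζ hw).hasDerivWithinAt)
    (fun w hw => norm_cDer_le hζ hw) h0 hz
  simpa [cInt, cH] using this

lemma hasDerivAt_cPsi {z : ℂ} (hz : z ∈ halfPl) :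
    IntegrableOn (cDer z) (Ioi 0) ∧
      HasDerivAt cPsi (∫ ζ in Ioi (0:ℝ), cDer z ζ) z := by
  refine hasDerivAt_integral_of_dominated_loc_of_deriv_le
    (bound := fun ζ : ℝ => uw ζ * ζ ^ (-3/2 : ℝ))
    (isOpen_halfPl.mem_nhds hz) ?_ (integrableOn_cInt hz)
    (measurable_cDer z).aestronglyMeasurable ?_ integrableOn_bd ?_
  · exact Eventually.of_forall fun w => (measurable_cInt w).aestronglyMeasurable
  · filter_upwards [ae_restrict_mem measurableSet_Ioi] with ζ hζ w hw
    exact norm_cDer_le hζ hw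
  · filter_upwards [ae_restrict_mem measurableSet_Ioi] with ζ hζ w hw
    exact hasDerivAt_cInt hζ hw

lemma cH_ofReal (ζ ξ : ℝ) : cH ζ (ξ : ℂ) = (hLim ζ ξ : ℂ) := by
  simp [cH, hLim, uw]

lemma ofReal_mem_halfPl {ξ : ℝ} (hξ : -1 < ξ) : (ξ : ℂ) ∈ halfPl := by simpa [halfPl] using hξ

lemma hLim_pos {ζ ξ : ℝ} (hζ : 0 < ζ) (hξ : -1 < ξ) : 0 < hLim ζ ξ := by
  have := le_re_cH hζ (ofReal_mem_halfPl hξ)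
  rw [cH_ofReal, Complex.ofReal_re] at this
  exact hζ.trans_le this

lemma cDer_ofReal {ζ ξ : ℝ} (hζ : 0 < ζ) (hξ : -1 < ξ) :
    cDer ξ ζ = (((1 - Real.exp (-ζ)) / (hLim ζ ξ) ^ ((3:ℝ)/2) : ℝ) : ℂ) := by
  have h := (hLim_pos hζ hξ).le
  rw [cDer, cH_ofReal, ← Complex.ofReal_cpow h, ← Complex.ofReal_mul, neg_div,
    Real.rpow_neg h, ← div_eq_mul_inv, uw]

lemma rpow_neg_half {x : ℝ} (hx : 0 ≤ x) : x ^ (-1/2 : ℝ) = (√x)⁻¹ := by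
  rw [neg_div, Real.rpow_neg hx, Real.sqrt_eq_rpow]

lemma cInt_ofReal {ζ ξ : ℝ} (hζ : 0 < ζ) (hξ : -1 < ξ) :
    cInt ξ ζ = ((2 * ξ * ((1 - Real.exp (-ζ)) /
      (√(2 * ζ) * √(hLim ζ ξ) * (√(2 * ζ) + √(hLim ζ ξ)))) : ℝ) : ℂ) := by
  have h := hLim_pos hζ hξ
  have h2 : 0 < 2 * ζ := by linarith
  rw [cInt, cH_ofReal, ← Complex.ofReal_cpow h.le, ← Complex.ofReal_cpow h2.le,
    rpow_neg_half h.le, rpow_neg_half h2.le]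
  have ha := Real.sqrt_pos.2 h
  have hb := Real.sqrt_pos.2 h2
  have key : 2 * ((√(2 * ζ))⁻¹ - (√(hLim ζ ξ))⁻¹) = 2 * ξ * ((1 - Real.exp (-ζ)) /
      (√(2 * ζ) * √(hLim ζ ξ) * (√(2 * ζ) + √(hLim ζ ξ)))) := by
    have ea := Real.sq_sqrt h.le
    have eb := Real.sq_sqrt h2.le
    have eh : hLim ζ ξ = 2 * ζ + ξ * (1 - Real.exp (-ζ)) := rfl
    have hs : ξ * (1 - Real.exp (-ζ)) = √(hLim ζ ξ) ^ 2 - √(2 * ζ) ^ 2 := by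
      rw [ea, eb, eh]; ring
    rw [mul_assoc 2 ξ, ← mul_div_assoc, hs]
    generalize √(hLim ζ ξ) = a at *
    generalize √(2 * ζ) = b at *
    field_simp
    ring
  rw [← key]
  push_cast
  rfl

lemma cPsi_ofReal {ξ : ℝ} (hξ : -1 < ξ) : cPsi ξ = (psiInf ξ : ℂ) := by
  rw [psiInf, ← integral_const_mul, ← integral_complex_ofReal]
  exact setIntegral_congr_fun measurableSet_Ioi fun ζ hζ => cInt_ofReal hζ hξ

lemma integral_cDer_ofReal {ξ : ℝ} (hξ : -1 < ξ) : ∫ ζ in Ioi (0:ℝ), cDer ξ ζ =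
    ((∫ ζ in Ioi (0:ℝ), (1 - Real.exp (-ζ)) / (hLim ζ ξ) ^ ((3:ℝ)/2) : ℝ) : ℂ) := by
  rw [← integral_complex_ofReal]
  exact setIntegral_congr_fun measurableSet_Ioi fun ζ hζ => cDer_ofReal hζ hξ

lemma psiInf_eventuallyEq {ξ : ℝ} (hξ : -1 < ξ) :
    (fun x : ℝ => (cPsi x).re) =ᶠ[nhds ξ] psiInf := by
  filter_upwards [Ioi_mem_nhds hξ] with x hx
  rw [cPsi_ofReal hx, Complex.ofReal_re]

lemma hasDerivAt_psiInf {ξ : ℝ} (hξ : -1 < ξ) : HasDerivAt psiInf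
    (∫ ζ in Ioi (0:ℝ), (1 - Real.exp (-ζ)) / (hLim ζ ξ) ^ ((3:ℝ)/2)) ξ := by
  have h := (hasDerivAt_cPsi (ofReal_mem_halfPl hξ)).2
  rw [integral_cDer_ofReal hξ] at h
  exact h.real_of_complex.congr_of_eventuallyEq (psiInf_eventuallyEq hξ).symm

lemma deriv_integral_pos {ξ : ℝ} (hξ : -1 < ξ) :
    0 < ∫ ζ in Ioi (0:ℝ), (1 - Real.exp (-ζ)) / (hLim ζ ξ) ^ ((3:ℝ)/2) := by
  have hpos : ∀ ζ ∈ Ioi (0:ℝ), 0 < (1 - Real.exp (-ζ)) / (hLim ζ ξ) ^ ((3:ℝ)/2) := fun ζ hζ =>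
    div_pos (uw_pos hζ) (Real.rpow_pos_of_pos (hLim_pos hζ hξ) _)
  have h_integrable : IntegrableOn (fun ζ => (1 - Real.exp (-ζ)) / (hLim ζ ξ) ^ ((3:ℝ)/2)) (Ioi 0) := by
    refine ((hasDerivAt_cPsi (ofReal_mem_halfPl hξ)).1.re).congr ?_
    filter_upwards [ae_restrict_mem measurableSet_Ioi] with ζ hζ
    rw [cDer_ofReal hζ hξ]
    rfl
  rw [setIntegral_pos_iff_support_of_nonneg_ae ?_ h_integrable]
  · have : Ioi (0:ℝ) ⊆
        (Function.support fun ζ => (1 - Real.exp (-ζ)) / (hLim ζ ξ) ^ ((3:ℝ)/2)) ∩ Ioi 0 :=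
      fun ζ hζ => ⟨(hpos ζ hζ).ne', hζ⟩
    exact lt_of_lt_of_le (by simp) (measure_mono this)
  · filter_upwards [ae_restrict_mem measurableSet_Ioi] with ζ hζ
    exact (hpos ζ hζ).le

lemma analyticAt_psiInf {ξ : ℝ} (hξ : -1 < ξ) : AnalyticAt ℝ psiInf ξ := by
  have hd : DifferentiableOn ℂ cPsi halfPl := fun z hz =>
    (hasDerivAt_cPsi hz).2.differentiableAt.differentiableWithinAt
  have ha : AnalyticAt ℂ cPsi (ξ : ℂ) :=
    hd.analyticAt (isOpen_halfPl.mem_nhds (ofReal_mem_halfPl hξ))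
  exact ha.re_ofReal.congr (psiInf_eventuallyEq hξ)

/-- `ψ_∞` is real analytic on `(0,∞)`, has derivative
`ψ_∞′(ξ) = ∫₀^∞ (1 − e^(−ζ))/h(ζ,ξ)^(3/2) dζ > 0` for `ξ > 0`, and is strictly increasing
on `[0,∞)`. -/
theorem stmt17 :
    AnalyticOn ℝ psiInf (Ioi 0) ∧
    (∀ ξ : ℝ, 0 < ξ →
      HasDerivAt psiInf
        (∫ ζ in Ioi (0:ℝ), (1 - Real.exp (-ζ)) / (hLim ζ ξ) ^ ((3:ℝ)/2)) ξ ∧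
      0 < ∫ ζ in Ioi (0:ℝ), (1 - Real.exp (-ζ)) / (hLim ζ ξ) ^ ((3:ℝ)/2)) ∧
    StrictMonoOn psiInf (Ici 0) := by
  refine ⟨fun ξ hξ => ?_, fun ξ hξ => ?_, ?_⟩
  · have hξ' : (0:ℝ) < ξ := hξ
    exact (analyticAt_psiInf (by linarith)).analyticWithinAt
  · exact ⟨hasDerivAt_psiInf (by linarith), deriv_integral_pos (by linarith)⟩
  · refine strictMonoOn_of_deriv_pos (convex_Ici 0) (fun ξ hξ => ?_) (fun ξ hξ => ?_)
    · have hξ' : (0:ℝ) ≤ ξ := hξ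
      exact (hasDerivAt_psiInf (by linarith)).continuousAt.continuousWithinAt
    · rw [interior_Ici] at hξ
      have hξ' : (0:ℝ) < ξ := hξ
      rw [(hasDerivAt_psiInf (by linarith)).deriv]
      exact deriv_integral_pos (by linarith)
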